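/- arXiv:math-ph/0305046 — 7 statements merged into one kernel-verified Lean document; each statement's English description precedes it below -/
import Mathlib

section
/- Let Ω ⊆ ℝ³ be open, let ν : Ω → ℂ be continuous, and let β = β₁e₁ + β₂e₂ + β₃e₃ be a constant purely vectorial biquaternion with β² ≠ 0 (i.e. β is not a zero divisor), and let λ ∈ ℂ satisfy λ² = −(β₁² + β₂² + β₃²), λ ≠ 0. Define S^± f := (1/(2λ))·f·(λ ± β) and P₁^± f := ½ f(1 ± ie₁). Then a differentiable function f : Ω → ℍ(ℂ) satisfies Df + νf + fβ = 0 on Ω if and only if the four functions f₁ := P₁⁺S⁺f, f₂ := P₁⁻S⁺f, f₃ := P₁⁺S⁻f, f₄ := P₁⁻S⁻f satisfy respectively Df₁ + f₁·((ν+λ)ie₁) = 0, Df₂ − f₂·((ν+λ)ie₁) = 0, Df₃ + f₃·((ν−λ)ie₁) = 0, Df₄ − f₄·((ν−λ)ie₁) = 0 on Ω; moreover in that case f = f₁ + f₂ + f₃ + f₄. -/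
noncomputable section

abbrev HC := Quaternion ℂ

def e1 : HC := ⟨0, 1, 0, 0⟩
def e2 : HC := ⟨0, 0, 1, 0⟩
def e3 : HC := ⟨0, 0, 0, 1⟩

def pd (k : Fin 3) (g : (Fin 3 → ℝ) → ℂ) (x : Fin 3 → ℝ) : ℂ :=
  fderiv ℝ g x (Pi.single k 1)

def lap (g : (Fin 3 → ℝ) → ℂ) (x : Fin 3 → ℝ) : ℂ :=
  pd 0 (pd 0 g) x + pd 1 (pd 1 g) x + pd 2 (pd 2 g) x

def pdq (k : Fin 3) (f : (Fin 3 → ℝ) → HC) (x : Fin 3 → ℝ) : HC :=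
  ⟨pd k (fun y => (f y).re) x, pd k (fun y => (f y).imI) x,
   pd k (fun y => (f y).imJ) x, pd k (fun y => (f y).imK) x⟩

def Dq (f : (Fin 3 → ℝ) → HC) (x : Fin 3 → ℝ) : HC :=
  e1 * pdq 0 f x + e2 * pdq 1 f x + e3 * pdq 2 f x

def lapq (f : (Fin 3 → ℝ) → HC) (x : Fin 3 → ℝ) : HC :=
  ⟨lap (fun y => (f y).re) x, lap (fun y => (f y).imI) x,
   lap (fun y => (f y).imJ) x, lap (fun y => (f y).imK) x⟩

def QDiffOn (f : (Fin 3 → ℝ) → HC) (Ω : Set (Fin 3 → ℝ)) : Prop :=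
  DifferentiableOn ℝ (fun y => (f y).re) Ω ∧ DifferentiableOn ℝ (fun y => (f y).imI) Ω ∧
  DifferentiableOn ℝ (fun y => (f y).imJ) Ω ∧ DifferentiableOn ℝ (fun y => (f y).imK) Ω

def QC2On (f : (Fin 3 → ℝ) → HC) (Ω : Set (Fin 3 → ℝ)) : Prop :=
  ContDiffOn ℝ 2 (fun y => (f y).re) Ω ∧ ContDiffOn ℝ 2 (fun y => (f y).imI) Ω ∧
  ContDiffOn ℝ 2 (fun y => (f y).imJ) Ω ∧ ContDiffOn ℝ 2 (fun y => (f y).imK) Ω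


/-- Right multiplication projections `S^± f = (1/(2λ)) f (λ ± β)`. -/
def Sp (lam : ℂ) (β : HC) (f : (Fin 3 → ℝ) → HC) : (Fin 3 → ℝ) → HC :=
  fun x => ((2 * lam)⁻¹ : ℂ) • (f x * ((lam : HC) + β))

def Sm (lam : ℂ) (β : HC) (f : (Fin 3 → ℝ) → HC) : (Fin 3 → ℝ) → HC :=
  fun x => ((2 * lam)⁻¹ : ℂ) • (f x * ((lam : HC) - β))

/-- Right multiplication projections `P₁^± f = ½ f (1 ± i e₁)`. -/
def P1p (f : (Fin 3 → ℝ) → HC) : (Fin 3 → ℝ) → HC :=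
  fun x => (2⁻¹ : ℂ) • (f x * (1 + (Complex.I : HC) * e1))

def P1m (f : (Fin 3 → ℝ) → HC) : (Fin 3 → ℝ) → HC :=
  fun x => (2⁻¹ : ℂ) • (f x * (1 - (Complex.I : HC) * e1))

@[simp] lemma e1_re : e1.re = 0 := rfl
@[simp] lemma e1_imI : e1.imI = 1 := rfl
@[simp] lemma e1_imJ : e1.imJ = 0 := rfl
@[simp] lemma e1_imK : e1.imK = 0 := rfl
@[simp] lemma e2_re : e2.re = 0 := rfl
@[simp] lemma e2_imI : e2.imI = 0 := rfl
@[simp] lemma e2_imJ : e2.imJ = 1 := rfl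
@[simp] lemma e2_imK : e2.imK = 0 := rfl
@[simp] lemma e3_re : e3.re = 0 := rfl
@[simp] lemma e3_imI : e3.imI = 0 := rfl
@[simp] lemma e3_imJ : e3.imJ = 0 := rfl
@[simp] lemma e3_imK : e3.imK = 1 := rfl

lemma pdq_re (k : Fin 3) (f : (Fin 3 → ℝ) → HC) (x : Fin 3 → ℝ) :
    (pdq k f x).re = pd k (fun y => (f y).re) x := rfl

lemma pdq_imI (k : Fin 3) (f : (Fin 3 → ℝ) → HC) (x : Fin 3 → ℝ) :
    (pdq k f x).imI = pd k (fun y => (f y).imI) x := rfl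

lemma pdq_imJ (k : Fin 3) (f : (Fin 3 → ℝ) → HC) (x : Fin 3 → ℝ) :
    (pdq k f x).imJ = pd k (fun y => (f y).imJ) x := rfl

lemma pdq_imK (k : Fin 3) (f : (Fin 3 → ℝ) → HC) (x : Fin 3 → ℝ) :
    (pdq k f x).imK = pd k (fun y => (f y).imK) x := rfl

lemma pd_lin (k : Fin 3) (a b c d : (Fin 3 → ℝ) → ℂ) (x : Fin 3 → ℝ)
    (ha : DifferentiableAt ℝ a x) (hb : DifferentiableAt ℝ b x)
    (hc : DifferentiableAt ℝ c x) (hd : DifferentiableAt ℝ d x) (p q r s : ℂ) :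
    pd k (fun y => a y * p + b y * q + c y * r + d y * s) x
      = pd k a x * p + pd k b x * q + pd k c x * r + pd k d x * s := by
  have h := (((ha.hasFDerivAt.mul_const p).add (hb.hasFDerivAt.mul_const q)).add
    (hc.hasFDerivAt.mul_const r)).add (hd.hasFDerivAt.mul_const s)
  have h2 : fderiv ℝ (fun y => a y * p + b y * q + c y * r + d y * s) x = _ := h.fderiv
  unfold pd
  rw [h2]
  simp [mul_comm]

lemma pdq_mul (k : Fin 3) (f : (Fin 3 → ℝ) → HC) (x : Fin 3 → ℝ) (c : HC)
    (h0 : DifferentiableAt ℝ (fun y => (f y).re) x)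
    (h1 : DifferentiableAt ℝ (fun y => (f y).imI) x)
    (h2 : DifferentiableAt ℝ (fun y => (f y).imJ) x)
    (h3 : DifferentiableAt ℝ (fun y => (f y).imK) x) :
    pdq k (fun y => f y * c) x = pdq k f x * c := by
  have key := fun p q r s : ℂ => pd_lin k _ _ _ _ x h0 h1 h2 h3 p q r s
  ext
  · have := key c.re (-c.imI) (-c.imJ) (-c.imK)
    rw [pdq_re, Quaternion.re_mul, pdq_re, pdq_imI, pdq_imJ, pdq_imK]
    simp only [Quaternion.re_mul]
    simp only [mul_neg, ← sub_eq_add_neg] at this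
    exact this
  · have := key c.imI c.re c.imK (-c.imJ)
    rw [pdq_imI, Quaternion.imI_mul, pdq_re, pdq_imI, pdq_imJ, pdq_imK]
    simp only [Quaternion.imI_mul]
    simp only [mul_neg, ← sub_eq_add_neg] at this
    exact this
  · have := key c.imJ (-c.imK) c.re c.imI
    rw [pdq_imJ, Quaternion.imJ_mul, pdq_re, pdq_imI, pdq_imJ, pdq_imK]
    simp only [Quaternion.imJ_mul]
    simp only [mul_neg, ← sub_eq_add_neg] at this
    exact this
  · have := key c.imK c.imJ (-c.imI) c.re
    rw [pdq_imK, Quaternion.imK_mul, pdq_re, pdq_imI, pdq_imJ, pdq_imK]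
    simp only [Quaternion.imK_mul]
    simp only [mul_neg, ← sub_eq_add_neg] at this
    exact this

lemma Dq_mul {Ω : Set (Fin 3 → ℝ)} (hΩ : IsOpen Ω) {f : (Fin 3 → ℝ) → HC} (hf : QDiffOn f Ω)
    {x : Fin 3 → ℝ} (hx : x ∈ Ω) (c : HC) :
    Dq (fun y => f y * c) x = Dq f x * c := by
  have hn := hΩ.mem_nhds hx
  obtain ⟨h0, h1, h2, h3⟩ := hf
  unfold Dq
  simp only [pdq_mul _ f x c (h0.differentiableAt hn) (h1.differentiableAt hn)
    (h2.differentiableAt hn) (h3.differentiableAt hn), add_mul, mul_assoc]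

lemma hc_mul_smul (r : ℂ) (a b : HC) : a * r • b = r • (a * b) := Algebra.mul_smul_comm r a b
lemma hc_smul_mul (r : ℂ) (a b : HC) : r • a * b = r • (a * b) := Algebra.smul_mul_assoc r a b
lemma hc_smul_add (r : ℂ) (a b : HC) : r • (a + b) = r • a + r • b := smul_add r a b
lemma hc_smul_sub (r : ℂ) (a b : HC) : r • (a - b) = r • a - r • b := smul_sub r a b
lemma hc_add_smul (r t : ℂ) (a : HC) : (r + t) • a = r • a + t • a := add_smul r t a
lemma hc_neg_smul (r : ℂ) (a : HC) : (-r) • a = -(r • a) := neg_smul r a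
lemma hc_smul_smul (r t : ℂ) (a : HC) : r • t • a = (r * t) • a := smul_smul r t a
lemma hc_smul_comm (r t : ℂ) (a : HC) : r • t • a = t • r • a := smul_comm r t a
lemma hc_two_smul (a : HC) : (2 : ℂ) • a = a + a := two_smul ℂ a
lemma hc_mul_neg (a b : HC) : a * -b = -(a * b) := mul_neg a b
lemma hc_one_smul (a : HC) : (1 : ℂ) • a = a := one_smul ℂ a

lemma Ie1_sq : ((Complex.I : HC) * e1) * ((Complex.I : HC) * e1) = 1 := by
  ext <;> simp <;> rfl

lemma beta_sq (β₁ β₂ β₃ lam : ℂ) (hlam : lam ^ 2 = -(β₁ ^ 2 + β₂ ^ 2 + β₃ ^ 2)) :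
    ((β₁ : HC) * e1 + (β₂ : HC) * e2 + (β₃ : HC) * e3) *
      ((β₁ : HC) * e1 + (β₂ : HC) * e2 + (β₃ : HC) * e3) = (lam : HC) * (lam : HC) := by
  ext
  · simp
    linear_combination -hlam
  all_goals simp
  all_goals ring

/-- The algebraic heart: the intertwining relation for one projection. -/
lemma step (D F β J s p : HC) (n l : ℂ) (hs : β * s = l • s) (hp : p * J = p) :
    D * (s * p) + F * (s * p) * (((n : HC) + (l : HC)) * J)
      = (D + (n : HC) * F + F * β) * (s * p) := by
  have e : F * (s * p) * (((n : HC) + (l : HC)) * J) = (n + l) • (F * (s * p)) := by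
    rw [← Quaternion.coe_add, Quaternion.coe_mul_eq_smul, hc_mul_smul, mul_assoc, mul_assoc s,
      hp]
  rw [e, add_mul, add_mul, mul_assoc F β, ← mul_assoc β, hs, Quaternion.coe_mul_eq_smul, hc_add_smul]
  simp only [hc_smul_mul, hc_mul_smul, add_assoc]

/-- Proposition 1 of the paper: splitting of `D + νI + M^β` into four
operators of the form `D ± M^{(ν±λ) i e₁}` by means of the projections `P₁^± S^±`. -/
theorem dirac_pseudoscalar_four_fold_splitting
    (Ω : Set (Fin 3 → ℝ)) (hΩ : IsOpen Ω)
    (ν : (Fin 3 → ℝ) → ℂ) (hν : ContinuousOn ν Ω)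
    (β₁ β₂ β₃ lam : ℂ)
    (hβ : β₁ ^ 2 + β₂ ^ 2 + β₃ ^ 2 ≠ 0)
    (hlam : lam ^ 2 = -(β₁ ^ 2 + β₂ ^ 2 + β₃ ^ 2)) (hlam0 : lam ≠ 0)
    (f : (Fin 3 → ℝ) → HC) (hf : QDiffOn f Ω) :
    (let β : HC := (β₁ : HC) * e1 + (β₂ : HC) * e2 + (β₃ : HC) * e3
     let f₁ := P1p (Sp lam β f)
     let f₂ := P1m (Sp lam β f)
     let f₃ := P1p (Sm lam β f)
     let f₄ := P1m (Sm lam β f)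
     ((∀ x ∈ Ω, Dq f x + (ν x : HC) * f x + f x * β = 0) ↔
       ((∀ x ∈ Ω, Dq f₁ x + f₁ x * (((ν x + lam) : HC) * ((Complex.I : HC) * e1)) = 0) ∧
        (∀ x ∈ Ω, Dq f₂ x - f₂ x * (((ν x + lam) : HC) * ((Complex.I : HC) * e1)) = 0) ∧
        (∀ x ∈ Ω, Dq f₃ x + f₃ x * (((ν x - lam) : HC) * ((Complex.I : HC) * e1)) = 0) ∧
        (∀ x ∈ Ω, Dq f₄ x - f₄ x * (((ν x - lam) : HC) * ((Complex.I : HC) * e1)) = 0))) ∧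
     (∀ x ∈ Ω, Dq f x + (ν x : HC) * f x + f x * β = 0 →
        f x = f₁ x + f₂ x + f₃ x + f₄ x)) := by
  intro β f₁ f₂ f₃ f₄
  have hββ : β * β = (lam : HC) * (lam : HC) := beta_sq β₁ β₂ β₃ lam hlam
  clear_value β
  have hJ := Ie1_sq
  set J : HC := (Complex.I : HC) * e1 with hJdef
  clear_value J
  obtain ⟨sp, hsp⟩ : ∃ s : HC, s = ((2 * lam)⁻¹ : ℂ) • ((lam : HC) + β) := ⟨_, rfl⟩
  obtain ⟨sm, hsm⟩ : ∃ s : HC, s = ((2 * lam)⁻¹ : ℂ) • ((lam : HC) - β) := ⟨_, rfl⟩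
  obtain ⟨pp, hpp⟩ : ∃ s : HC, s = (2⁻¹ : ℂ) • (1 + J) := ⟨_, rfl⟩
  obtain ⟨pm, hpm⟩ : ∃ s : HC, s = (2⁻¹ : ℂ) • (1 - J) := ⟨_, rfl⟩
  have h1 : f₁ = fun y => f y * (sp * pp) := by
    funext y
    simp only [f₁, P1p, Sp, ← hJdef, hsp, hpp, hc_smul_mul, hc_mul_smul, mul_assoc]
    try rw [hc_smul_comm]
  have h2 : f₂ = fun y => f y * (sp * pm) := by
    funext y
    simp only [f₂, P1m, Sp, ← hJdef, hsp, hpm, hc_smul_mul, hc_mul_smul, mul_assoc]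
    try rw [hc_smul_comm]
  have h3 : f₃ = fun y => f y * (sm * pp) := by
    funext y
    simp only [f₃, P1p, Sm, ← hJdef, hsm, hpp, hc_smul_mul, hc_mul_smul, mul_assoc]
    try rw [hc_smul_comm]
  have h4 : f₄ = fun y => f y * (sm * pm) := by
    funext y
    simp only [f₄, P1m, Sm, ← hJdef, hsm, hpm, hc_smul_mul, hc_mul_smul, mul_assoc]
    try rw [hc_smul_comm]
  clear_value f₁ f₂ f₃ f₄
  subst h1 h2 h3 h4
  have hp1 : pp * J = pp := by
    rw [hpp, hc_smul_mul, add_mul, hJ, one_mul, add_comm]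
  have hp2 : pm * (-J) = pm := by
    rw [hpm, hc_smul_mul, sub_mul, hc_mul_neg, hc_mul_neg, hJ, one_mul]
    congr 1
    abel
  have hs1 : β * sp = lam • sp := by
    rw [hsp, hc_mul_smul, hc_smul_comm lam, mul_add, hββ, Quaternion.coe_mul_eq_smul,
      Quaternion.mul_coe_eq_smul, ← hc_smul_add, add_comm β]
  have hs2 : β * sm = (-lam) • sm := by
    rw [hsm, hc_mul_smul, hc_smul_comm (-lam), mul_sub, hββ, Quaternion.coe_mul_eq_smul,
      Quaternion.mul_coe_eq_smul, hc_neg_smul, ← hc_smul_sub, ← neg_sub β (lam : HC),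
      ← hc_neg_smul, ← neg_one_smul ℂ (β - (lam : HC))]
    rw [hc_smul_smul (-lam)]
    simp
  have hsum : sp * pp + sp * pm + sm * pp + sm * pm = 1 := by
    have a : pp + pm = 1 := by
      rw [hpp, hpm, ← hc_smul_add, add_add_sub_cancel, ← hc_two_smul (1 : HC), hc_smul_smul]
      norm_num [hc_one_smul]
    have b : sp + sm = 1 := by
      rw [hsp, hsm, ← hc_smul_add, add_add_sub_cancel, ← hc_two_smul (lam : HC), hc_smul_smul,
        ← Quaternion.coe_mul_eq_smul, ← Quaternion.coe_mul]
      have : (2 * lam)⁻¹ * 2 * lam = 1 := by field_simp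
      rw [this, Quaternion.coe_one]
    rw [← mul_add, add_assoc, ← mul_add, a, mul_one, mul_one, b]
  have k1 : ∀ x ∈ Ω, Dq (fun y => f y * (sp * pp)) x
      + f x * (sp * pp) * (((ν x : HC) + (lam : HC)) * J)
      = (Dq f x + (ν x : HC) * f x + f x * β) * (sp * pp) := fun x hx => by
    rw [Dq_mul hΩ hf hx, step _ _ β J sp pp _ _ hs1 hp1]
  have k2 : ∀ x ∈ Ω, Dq (fun y => f y * (sp * pm)) x
      - f x * (sp * pm) * (((ν x : HC) + (lam : HC)) * J)
      = (Dq f x + (ν x : HC) * f x + f x * β) * (sp * pm) := fun x hx => by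
    rw [Dq_mul hΩ hf hx, ← step _ _ β (-J) sp pm _ _ hs1 hp2, mul_neg, mul_neg, sub_eq_add_neg]
  have k3 : ∀ x ∈ Ω, Dq (fun y => f y * (sm * pp)) x
      + f x * (sm * pp) * (((ν x : HC) - (lam : HC)) * J)
      = (Dq f x + (ν x : HC) * f x + f x * β) * (sm * pp) := fun x hx => by
    rw [Dq_mul hΩ hf hx, ← step _ _ β J sm pp _ _ hs2 hp1, Quaternion.coe_neg,
      ← sub_eq_add_neg (ν x : HC)]
  have k4 : ∀ x ∈ Ω, Dq (fun y => f y * (sm * pm)) x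
      - f x * (sm * pm) * (((ν x : HC) - (lam : HC)) * J)
      = (Dq f x + (ν x : HC) * f x + f x * β) * (sm * pm) := fun x hx => by
    rw [Dq_mul hΩ hf hx, ← step _ _ β (-J) sm pm _ _ hs2 hp2, Quaternion.coe_neg,
      ← sub_eq_add_neg (ν x : HC), mul_neg, mul_neg, sub_eq_add_neg]
  refine ⟨⟨fun h => ⟨fun x hx => ?_, fun x hx => ?_, fun x hx => ?_, fun x hx => ?_⟩, ?_⟩, ?_⟩
  · exact (k1 x hx).trans (by rw [h x hx, zero_mul])
  · exact (k2 x hx).trans (by rw [h x hx, zero_mul])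
  · exact (k3 x hx).trans (by rw [h x hx, zero_mul])
  · exact (k4 x hx).trans (by rw [h x hx, zero_mul])
  · rintro ⟨g1, g2, g3, g4⟩ x hx
    have q1 := (k1 x hx).symm.trans (g1 x hx)
    have q2 := (k2 x hx).symm.trans (g2 x hx)
    have q3 := (k3 x hx).symm.trans (g3 x hx)
    have q4 := (k4 x hx).symm.trans (g4 x hx)
    rw [← mul_one (Dq f x + (ν x : HC) * f x + f x * β), ← hsum, mul_add, mul_add, mul_add,
      q1, q2, q3, q4]
    simp
  · intro x hx _
    show f x = f x * (sp * pp) + f x * (sp * pm) + f x * (sm * pp) + f x * (sm * pm)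
    rw [← mul_add, ← mul_add, ← mul_add, hsum, mul_one]
end
end

section
/- Let Ω ⊆ ℝ³ be open, ω, m ∈ ℝ, and φ_sc : Ω → ℝ continuous. Let Ω̃ := {x ∈ ℝ³ : (x₁,x₂,−x₃) ∈ Ω}. For a differentiable Φ : Ω → ℂ⁴ define F : Ω̃ → ℍ(ℂ) by F = F₀ + F₁e₁ + F₂e₂ + F₃e₃ with F₀(x) = −½(Φ̃₁(x) − Φ̃₂(x)), F₁(x) = (i/2)(Φ̃₀(x) − Φ̃₃(x)), F₂(x) = −½(Φ̃₀(x) + Φ̃₃(x)), F₃(x) = (i/2)(Φ̃₁(x) + Φ̃₂(x)), where Φ̃(x) := Φ(x₁,x₂,−x₃). Then Φ satisfies the Dirac equation with scalar potential, iωγ₀Φ + γ₁∂₁Φ + γ₂∂₂Φ + γ₃∂₃Φ + i(m + φ_sc)Φ = 0 on Ω, if and only if F satisfies DF + F·α_sc = 0 on Ω̃, where α_sc(x) = −(iω e₁ + (m + φ_sc(x₁,x₂,−x₃)) e₂). -/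
noncomputable section

open Matrix in
/-- The γ-matrices in the standard Dirac representation. -/
def γ0 : Matrix (Fin 4) (Fin 4) ℂ := !![1,0,0,0; 0,1,0,0; 0,0,-1,0; 0,0,0,-1]
open Matrix in
def γ1 : Matrix (Fin 4) (Fin 4) ℂ := !![0,0,0,1; 0,0,1,0; 0,-1,0,0; -1,0,0,0]
open Matrix in
def γ2 : Matrix (Fin 4) (Fin 4) ℂ :=
  !![0,0,0,-Complex.I; 0,0,Complex.I,0; 0,Complex.I,0,0; -Complex.I,0,0,0]
open Matrix in
def γ3 : Matrix (Fin 4) (Fin 4) ℂ := !![0,0,1,0; 0,0,0,-1; -1,0,0,0; 0,1,0,0]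

/-- Componentwise partial derivative of a `ℂ⁴`-valued function. -/
def pdv (k : Fin 3) (Φ : (Fin 3 → ℝ) → (Fin 4 → ℂ)) (x : Fin 3 → ℝ) : Fin 4 → ℂ :=
  fun j => pd k (fun y => Φ y j) x

/-- The reflection `x ↦ (x₁, x₂, −x₃)`. -/
def refl3 (x : Fin 3 → ℝ) : Fin 3 → ℝ := ![x 0, x 1, -x 2]

/-- The transform `F = 𝒜[Φ]` of the paper (with `Φ̃(x) = Φ(x₁,x₂,−x₃)`). -/
def AF (Φ : (Fin 3 → ℝ) → (Fin 4 → ℂ)) (x : Fin 3 → ℝ) : HC :=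
  ⟨-(Φ (refl3 x) 1 - Φ (refl3 x) 2) / 2,
   Complex.I * (Φ (refl3 x) 0 - Φ (refl3 x) 3) / 2,
   -(Φ (refl3 x) 0 + Φ (refl3 x) 3) / 2,
   Complex.I * (Φ (refl3 x) 1 + Φ (refl3 x) 2) / 2⟩

/-- A biquaternion from its components. -/
def mkq (a b c d : ℂ) : HC := ⟨a, b, c, d⟩

theorem mkq_re (a b c d : ℂ) : (mkq a b c d).re = a := rfl
theorem zero_re' : (0 : HC).re = 0 := rfl
theorem mkq_imI (a b c d : ℂ) : (mkq a b c d).imI = b := rfl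
theorem zero_imI' : (0 : HC).imI = 0 := rfl
theorem mkq_imJ (a b c d : ℂ) : (mkq a b c d).imJ = c := rfl
theorem zero_imJ' : (0 : HC).imJ = 0 := rfl
theorem mkq_imK (a b c d : ℂ) : (mkq a b c d).imK = d := rfl
theorem zero_imK' : (0 : HC).imK = 0 := rfl
theorem e1_mk : e1 = mkq 0 1 0 0 := rfl
theorem e2_mk : e2 = mkq 0 0 1 0 := rfl
theorem e3_mk : e3 = mkq 0 0 0 1 := rfl
theorem AF_mk (Φ : (Fin 3 → ℝ) → (Fin 4 → ℂ)) (x : Fin 3 → ℝ) : AF Φ x =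
  mkq (-(Φ (refl3 x) 1 - Φ (refl3 x) 2) / 2)
   (Complex.I * (Φ (refl3 x) 0 - Φ (refl3 x) 3) / 2)
   (-(Φ (refl3 x) 0 + Φ (refl3 x) 3) / 2)
   (Complex.I * (Φ (refl3 x) 1 + Φ (refl3 x) 2) / 2) := rfl

/-- The reflection as a continuous linear map. -/
def refl3L : (Fin 3 → ℝ) →L[ℝ] (Fin 3 → ℝ) :=
  ContinuousLinearMap.pi ![ContinuousLinearMap.proj 0, ContinuousLinearMap.proj 1,
    -ContinuousLinearMap.proj 2]

theorem refl3L_apply (x : Fin 3 → ℝ) : refl3L x = refl3 x := by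
  ext j; fin_cases j <;> simp [refl3L, refl3]

theorem refl3_refl3 (x : Fin 3 → ℝ) : refl3 (refl3 x) = x := by
  ext j; fin_cases j <;> simp [refl3]

/-- Sign picked up by the `k`-th partial derivative under the reflection. -/
def sg (k : Fin 3) : ℂ := ![1, 1, -1] k

theorem pd_lin_s3 (k : Fin 3) (f g : (Fin 3 → ℝ) → ℂ) (a b : ℂ) (x : Fin 3 → ℝ)
    (hf : DifferentiableAt ℝ f (refl3 x)) (hg : DifferentiableAt ℝ g (refl3 x)) :
    pd k (fun y => a * f (refl3 y) + b * g (refl3 y)) x =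
      sg k * (a * pd k f (refl3 x) + b * pd k g (refl3 x)) := by
  have hr : HasFDerivAt refl3 refl3L x := by
    have := refl3L.hasFDerivAt (x := x)
    rwa [show (⇑refl3L) = refl3 from funext refl3L_apply] at this
  have h1 := (hf.hasFDerivAt.comp x hr).const_mul a
  have h2 := (hg.hasFDerivAt.comp x hr).const_mul b
  have h := (h1.add h2).fderiv
  have e : (fun y => a * f (refl3 y) + b * g (refl3 y)) =
      ((fun y => a * (f ∘ refl3) y) + fun y => b * (g ∘ refl3) y) := rfl
  have hs : refl3 (Pi.single k 1) = ((![1, 1, -1] : Fin 3 → ℝ) k) • Pi.single k (1 : ℝ) := by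
    ext j; fin_cases k <;> fin_cases j <;> simp [refl3]
  unfold pd
  rw [e, h]
  simp only [_root_.add_apply, _root_.smul_apply,
    ContinuousLinearMap.comp_apply, refl3L_apply, hs, map_smul, smul_eq_mul]
  fin_cases k <;> simp [sg] <;> ring

theorem pdq_AF (k : Fin 3) (Φ : (Fin 3 → ℝ) → (Fin 4 → ℂ)) (x : Fin 3 → ℝ)
    (h : ∀ j, DifferentiableAt ℝ (fun y => Φ y j) (refl3 x)) :
    pdq k (AF Φ) x =
      mkq (sg k * (-(pdv k Φ (refl3 x) 1 - pdv k Φ (refl3 x) 2) / 2))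
       (sg k * (Complex.I * (pdv k Φ (refl3 x) 0 - pdv k Φ (refl3 x) 3) / 2))
       (sg k * (-(pdv k Φ (refl3 x) 0 + pdv k Φ (refl3 x) 3) / 2))
       (sg k * (Complex.I * (pdv k Φ (refl3 x) 1 + pdv k Φ (refl3 x) 2) / 2)) := by
  have key := fun (i j : Fin 4) (a b : ℂ) => pd_lin_s3 k _ _ a b x (h i) (h j)
  unfold pdq pdv mkq
  congr 1
  · rw [show (fun y => (AF Φ y).re) = fun y => (-1/2) * Φ (refl3 y) 1 + (1/2) * Φ (refl3 y) 2 from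
      by funext y; simp only [AF]; ring, key 1 2]
    ring
  · rw [show (fun y => (AF Φ y).imI) = fun y => (Complex.I/2) * Φ (refl3 y) 0
        + (-Complex.I/2) * Φ (refl3 y) 3 from
      by funext y; simp only [AF]; ring, key 0 3]
    ring
  · rw [show (fun y => (AF Φ y).imJ) = fun y => (-1/2) * Φ (refl3 y) 0 + (-1/2) * Φ (refl3 y) 3 from
      by funext y; simp only [AF]; ring, key 0 3]
    ring
  · rw [show (fun y => (AF Φ y).imK) = fun y => (Complex.I/2) * Φ (refl3 y) 1
        + (Complex.I/2) * Φ (refl3 y) 2 from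
      by funext y; simp only [AF]; ring, key 1 2]
    ring

/-- The pointwise algebraic identity. -/
theorem alg_identity (Φ : (Fin 3 → ℝ) → (Fin 4 → ℂ)) (x : Fin 3 → ℝ) (a M : ℂ) (r : Fin 4 → ℂ)
    (h : ∀ j, DifferentiableAt ℝ (fun y => Φ y j) (refl3 x))
    (hr : r = a • γ0.mulVec (Φ (refl3 x)) + γ1.mulVec (pdv 0 Φ (refl3 x)) +
          γ2.mulVec (pdv 1 Φ (refl3 x)) + γ3.mulVec (pdv 2 Φ (refl3 x)) +
          (Complex.I * M) • Φ (refl3 x)) :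
    Dq (AF Φ) x + AF Φ x * (-(a • e1 + M • e2)) =
      mkq (Complex.I / 2 * (r 0 + r 3)) ((r 1 + r 2) / 2) (Complex.I / 2 * (r 2 - r 1))
        ((r 3 - r 0) / 2) := by
  have I2 : Complex.I ^ 2 = -1 := Complex.I_sq
  unfold Dq
  rw [pdq_AF 0 Φ x h, pdq_AF 1 Φ x h, pdq_AF 2 Φ x h]
  subst hr
  generalize pdv 0 Φ (refl3 x) = p
  generalize pdv 1 Φ (refl3 x) = q
  generalize pdv 2 Φ (refl3 x) = s
  rw [AF_mk, e1_mk, e2_mk, e3_mk]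
  generalize Φ (refl3 x) = v
  ext <;>
  simp [mkq_re, mkq_imI, mkq_imJ, mkq_imK, sg, γ0, γ1, γ2, γ3, Matrix.mulVec, dotProduct, Fin.sum_univ_four] <;>
  ring_nf <;> simp only [I2] <;> ring

/-- the Dirac equation with scalar potential
`iωγ₀Φ + Σ γ_k ∂_kΦ + i(m + φ_sc)Φ = 0` on `Ω` is equivalent, under the transform `F = 𝒜[Φ]`,
to `DF + F·α_sc = 0` on `Ω̃`, with `α_sc = −(iω e₁ + (m + φ̃_sc) e₂)`. -/
theorem dirac_scalar_potential_equiv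
    (Ω : Set (Fin 3 → ℝ)) (hΩ : IsOpen Ω) (ω m : ℝ)
    (φsc : (Fin 3 → ℝ) → ℝ) (hφ : ContinuousOn φsc Ω)
    (Φ : (Fin 3 → ℝ) → (Fin 4 → ℂ))
    (hΦ : ∀ j : Fin 4, DifferentiableOn ℝ (fun y => Φ y j) Ω) :
    (∀ x ∈ Ω,
        (Complex.I * (ω : ℂ)) • γ0.mulVec (Φ x) + γ1.mulVec (pdv 0 Φ x) +
          γ2.mulVec (pdv 1 Φ x) + γ3.mulVec (pdv 2 Φ x) +
          (Complex.I * ((m : ℂ) + (φsc x : ℂ))) • Φ x = 0) ↔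
    (∀ x, refl3 x ∈ Ω →
        Dq (AF Φ) x + AF Φ x *
          (-((Complex.I * (ω : ℂ)) • e1 + (((m : ℂ) + (φsc (refl3 x) : ℂ))) • e2)) = 0) := by
  have main : ∀ x, refl3 x ∈ Ω →
      (((Complex.I * (ω : ℂ)) • γ0.mulVec (Φ (refl3 x)) + γ1.mulVec (pdv 0 Φ (refl3 x)) +
          γ2.mulVec (pdv 1 Φ (refl3 x)) + γ3.mulVec (pdv 2 Φ (refl3 x)) +
          (Complex.I * ((m : ℂ) + (φsc (refl3 x) : ℂ))) • Φ (refl3 x) = 0) ↔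
        Dq (AF Φ) x + AF Φ x *
          (-((Complex.I * (ω : ℂ)) • e1 + (((m : ℂ) + (φsc (refl3 x) : ℂ))) • e2)) = 0) := by
    intro x hx
    rw [alg_identity Φ x _ _ _
      (fun j => (hΦ j).differentiableAt (hΩ.mem_nhds hx)) rfl]
    generalize (Complex.I * (ω : ℂ)) • γ0.mulVec (Φ (refl3 x)) + γ1.mulVec (pdv 0 Φ (refl3 x)) +
          γ2.mulVec (pdv 1 Φ (refl3 x)) + γ3.mulVec (pdv 2 Φ (refl3 x)) +
          (Complex.I * ((m : ℂ) + (φsc (refl3 x) : ℂ))) • Φ (refl3 x) = r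
    constructor
    · rintro rfl
      ext <;> simp [mkq_re, mkq_imI, mkq_imJ, mkq_imK, zero_re', zero_imI', zero_imJ', zero_imK']
    · intro h
      have h0 := congrArg QuaternionAlgebra.re h
      have h1 := congrArg QuaternionAlgebra.imI h
      have h2 := congrArg QuaternionAlgebra.imJ h
      have h3 := congrArg QuaternionAlgebra.imK h
      simp [mkq_re, mkq_imI, mkq_imJ, mkq_imK, zero_re', zero_imI', zero_imJ', zero_imK'] at h0 h1 h2 h3
      ext j
      fin_cases j <;> simp <;> grind
  constructor
  · intro h x hx
    exact (main x hx).1 (h _ hx)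
  · intro h x hx
    have hx' : refl3 (refl3 x) ∈ Ω := by rwa [refl3_refl3]
    have := (main (refl3 x) hx').2 (h _ hx')
    rwa [refl3_refl3] at this
end
end

section
/- Let Ω ⊆ ℝ³ be open, ε : Ω → ℝ twice differentiable with ε > 0 on Ω, and E : Ω → ℝ³ a differentiable vector field, identified with a purely vectorial ℍ(ℂ)-valued function. Set E⃗ := √ε·E and α⃗_ε := (grad √ε)/√ε (a purely vectorial function). Then E satisfies the sourceless static Maxwell system div(εE) = 0 and rot E = 0 on Ω if and only if E⃗ satisfies D E⃗ + E⃗·α⃗_ε = 0 on Ω. -/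
noncomputable section

/-- Build a biquaternion from its four complex components. -/
def quat (a b c d : ℂ) : HC := ⟨a, b, c, d⟩

/-- Partial derivative of a real-valued function on ℝ³. -/
def pdR (k : Fin 3) (g : (Fin 3 → ℝ) → ℝ) (x : Fin 3 → ℝ) : ℝ :=
  fderiv ℝ g x (Pi.single k 1)

lemma pd_ofReal (k : Fin 3) (g : (Fin 3 → ℝ) → ℝ) (x : Fin 3 → ℝ)
    (hg : DifferentiableAt ℝ g x) :
    pd k (fun y => ((g y : ℝ) : ℂ)) x = ((pdR k g x : ℝ) : ℂ) := by
  have h := (Complex.ofRealCLM.hasFDerivAt (x := g x)).comp x hg.hasFDerivAt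
  have h2 : HasFDerivAt (fun y => ((g y : ℝ) : ℂ)) (Complex.ofRealCLM.comp (fderiv ℝ g x)) x := h
  unfold pd pdR
  rw [h2.fderiv]
  rfl

lemma pd_zero (k : Fin 3) (x : Fin 3 → ℝ) : pd k (fun _ => (0 : ℂ)) x = 0 := by
  simp [pd]

lemma pdR_mul (k : Fin 3) (f g : (Fin 3 → ℝ) → ℝ) (x : Fin 3 → ℝ)
    (hf : DifferentiableAt ℝ f x) (hg : DifferentiableAt ℝ g x) :
    pdR k (fun y => f y * g y) x = f x * pdR k g x + g x * pdR k f x := by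
  unfold pdR
  have h : fderiv ℝ (fun y => f y * g y) x = _ := (hf.hasFDerivAt.mul hg.hasFDerivAt).fderiv
  rw [h]
  simp

lemma quat_mul (a b c d a2 b2 c2 d2 : ℂ) : quat a b c d * quat a2 b2 c2 d2 =
    quat (a * a2 - b * b2 - c * c2 - d * d2) (a * b2 + b * a2 + c * d2 - d * c2)
      (a * c2 - b * d2 + c * a2 + d * b2) (a * d2 + b * c2 - c * b2 + d * a2) := by
  ext
  · exact Quaternion.re_mul _ _
  · exact Quaternion.imI_mul _ _
  · exact Quaternion.imJ_mul _ _
  · exact Quaternion.imK_mul _ _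

lemma quat_add (a b c d a2 b2 c2 d2 : ℂ) : quat a b c d + quat a2 b2 c2 d2 =
    quat (a + a2) (b + b2) (c + c2) (d + d2) := rfl

lemma e1_quat : e1 = quat 0 1 0 0 := rfl

lemma e2_quat : e2 = quat 0 0 1 0 := rfl

lemma e3_quat : e3 = quat 0 0 0 1 := rfl

/-- the sourceless static Maxwell system `div(εE) = 0`, `rot E = 0`
is equivalent to `D E⃗ + E⃗·α⃗_ε = 0` for `E⃗ = √ε·E` and `α⃗_ε = (grad √ε)/√ε`. -/
theorem static_maxwell_quaternionic
    (Ω : Set (Fin 3 → ℝ)) (hΩ : IsOpen Ω)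
    (ε : (Fin 3 → ℝ) → ℝ) (hε : ContDiffOn ℝ 2 ε Ω) (hεpos : ∀ x ∈ Ω, 0 < ε x)
    (E1 E2 E3 : (Fin 3 → ℝ) → ℝ)
    (hE1 : DifferentiableOn ℝ E1 Ω) (hE2 : DifferentiableOn ℝ E2 Ω)
    (hE3 : DifferentiableOn ℝ E3 Ω) :
    (let sq : (Fin 3 → ℝ) → ℝ := fun y => Real.sqrt (ε y)
     let Ev : (Fin 3 → ℝ) → HC := fun y =>
       quat 0 ((sq y * E1 y : ℝ) : ℂ) ((sq y * E2 y : ℝ) : ℂ) ((sq y * E3 y : ℝ) : ℂ)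
     let αε : (Fin 3 → ℝ) → HC := fun y =>
       quat 0 ((pdR 0 sq y / sq y : ℝ) : ℂ) ((pdR 1 sq y / sq y : ℝ) : ℂ)
         ((pdR 2 sq y / sq y : ℝ) : ℂ)
     (∀ x ∈ Ω,
        (pdR 0 (fun y => ε y * E1 y) x + pdR 1 (fun y => ε y * E2 y) x +
            pdR 2 (fun y => ε y * E3 y) x = 0) ∧
        (pdR 1 E3 x - pdR 2 E2 x = 0) ∧
        (pdR 2 E1 x - pdR 0 E3 x = 0) ∧
        (pdR 0 E2 x - pdR 1 E1 x = 0)) ↔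
     (∀ x ∈ Ω, Dq Ev x + Ev x * αε x = 0)) := by
  intro sq Ev αε
  refine forall₂_congr fun x hx => ?_
  have hn := hΩ.mem_nhds hx
  have dε : DifferentiableAt ℝ ε x := (hε.contDiffAt hn).differentiableAt (by norm_num)
  have d1 := hE1.differentiableAt hn
  have d2 := hE2.differentiableAt hn
  have d3 := hE3.differentiableAt hn
  have ds : DifferentiableAt ℝ sq x := dε.sqrt (hεpos x hx).ne'
  have hs : 0 < sq x := Real.sqrt_pos.2 (hεpos x hx)
  have hs2 : ε x = sq x * sq x := (Real.mul_self_sqrt (hεpos x hx).le).symm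
  have hpε : ∀ k, pdR k ε x = sq x * pdR k sq x + sq x * pdR k sq x := by
    intro k
    rw [← pdR_mul k sq sq x ds ds]
    unfold pdR
    congr 1
    apply Filter.EventuallyEq.fderiv_eq
    filter_upwards [hn] with y hy
    exact (Real.mul_self_sqrt (hεpos y hy).le).symm
  have p1 : ∀ k, pd k (fun y => ((sq y * E1 y : ℝ) : ℂ)) x
      = ((sq x * pdR k E1 x + E1 x * pdR k sq x : ℝ) : ℂ) := fun k => by
    rw [pd_ofReal k (fun y => sq y * E1 y) x (ds.mul d1), pdR_mul k _ _ x ds d1]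
  have p2 : ∀ k, pd k (fun y => ((sq y * E2 y : ℝ) : ℂ)) x
      = ((sq x * pdR k E2 x + E2 x * pdR k sq x : ℝ) : ℂ) := fun k => by
    rw [pd_ofReal k (fun y => sq y * E2 y) x (ds.mul d2), pdR_mul k _ _ x ds d2]
  have p3 : ∀ k, pd k (fun y => ((sq y * E3 y : ℝ) : ℂ)) x
      = ((sq x * pdR k E3 x + E3 x * pdR k sq x : ℝ) : ℂ) := fun k => by
    rw [pd_ofReal k (fun y => sq y * E3 y) x (ds.mul d3), pdR_mul k _ _ x ds d3]
  have hq : ∀ k, pdq k Ev x = quat 0 ((sq x * pdR k E1 x + E1 x * pdR k sq x : ℝ) : ℂ)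
      ((sq x * pdR k E2 x + E2 x * pdR k sq x : ℝ) : ℂ)
      ((sq x * pdR k E3 x + E3 x * pdR k sq x : ℝ) : ℂ) := fun k => by
    rw [← p1, ← p2, ← p3, ← pd_zero k x]
    rfl
  have key : Dq Ev x + Ev x * αε x = quat
      ((-(sq x * (pdR 0 E1 x + pdR 1 E2 x + pdR 2 E3 x)
        + 2 * (E1 x * pdR 0 sq x + E2 x * pdR 1 sq x + E3 x * pdR 2 sq x)) : ℝ) : ℂ)
      ((sq x * (pdR 1 E3 x - pdR 2 E2 x) : ℝ) : ℂ)
      ((sq x * (pdR 2 E1 x - pdR 0 E3 x) : ℝ) : ℂ)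
      ((sq x * (pdR 0 E2 x - pdR 1 E1 x) : ℝ) : ℂ) := by
    have hc : ((sq x : ℝ) : ℂ) ≠ 0 := by exact_mod_cast hs.ne'
    unfold Dq
    rw [hq, hq, hq]
    simp only [Ev, αε]
    generalize sq x = s at *
    rw [e1_quat, e2_quat, e3_quat]
    simp only [quat_mul, quat_add]
    push_cast
    congr 1 <;> field_simp <;> ring
  rw [key, pdR_mul 0 _ _ x dε d1, pdR_mul 1 _ _ x dε d2, pdR_mul 2 _ _ x dε d3,
    hpε, hpε, hpε, hs2]
  have hz : ∀ a b c d : ℝ, quat (a : ℂ) (b : ℂ) (c : ℂ) (d : ℂ) = 0 ↔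
      a = 0 ∧ b = 0 ∧ c = 0 ∧ d = 0 := by
    intro a b c d
    rw [Quaternion.ext_iff]
    change ((a : ℂ) = 0 ∧ (b : ℂ) = 0 ∧ (c : ℂ) = 0 ∧ (d : ℂ) = 0) ↔ _
    simp only [Complex.ofReal_eq_zero]
  rw [hz]
  have hm : ∀ t : ℝ, sq x * t = 0 ↔ t = 0 := fun t => by simp [hs.ne']
  rw [hm, hm, hm, neg_eq_zero]
  refine and_congr_left fun _ => ?_
  rw [← hm (sq x * (_ + _ + _) + _)]
  refine Eq.congr ?_ rfl
  ring
end
end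

section
/- Let Ω ⊆ ℝ³ be open, v : Ω → ℂ continuous, and φ : Ω → ℂ a twice differentiable nonvanishing scalar function satisfying the Schrödinger equation −Δφ + vφ = 0 on Ω. Then the purely vectorial function α := (∇φ)/φ = ((∂₁φ)e₁ + (∂₂φ)e₂ + (∂₃φ)e₃)/φ satisfies the quaternionic Riccati equation Dα + α² = −v on Ω. -/
noncomputable section

lemma pd_quot (φ : (Fin 3 → ℝ) → ℂ) (x : Fin 3 → ℝ) (h : ContDiffAt ℝ 2 φ x) (h0 : φ x ≠ 0)
    (j k : Fin 3) : pd k (fun y => pd j φ y / φ y) x =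
      pd k (pd j φ) x / φ x - pd j φ x * pd k φ x / (φ x) ^ 2 := by
  have hd : DifferentiableAt ℝ φ x := h.differentiableAt (by norm_num)
  have h1 : DifferentiableAt ℝ (fderiv ℝ φ) x :=
    (h.fderiv_right (m := 1) (by norm_num)).differentiableAt (by norm_num)
  have h2 : DifferentiableAt ℝ (pd j φ) x := by
    unfold pd
    exact h1.clm_apply (differentiableAt_const _)
  have h3 := (h2.hasFDerivAt.mul ((hasDerivAt_inv h0).comp_hasFDerivAt_of_eq x hd.hasFDerivAt rfl)).fderiv
  have h4 : (fun y => pd j φ y / φ y) = (pd j φ * fun y => (φ y)⁻¹) := by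
    ext y; simp [div_eq_mul_inv]
  rw [h4]
  conv_lhs => unfold pd
  unfold pd at h3 ⊢
  erw [h3]
  simp
  field_simp
  ring

lemma pd_comm (φ : (Fin 3 → ℝ) → ℂ) (x : Fin 3 → ℝ) (h : ContDiffAt ℝ 2 φ x)
    (j k : Fin 3) : pd k (pd j φ) x = pd j (pd k φ) x := by
  have h1 : DifferentiableAt ℝ (fderiv ℝ φ) x :=
    (h.fderiv_right (m := 1) (by norm_num)).differentiableAt (by norm_num)
  have hs : IsSymmSndFDerivAt ℝ φ x := h.isSymmSndFDerivAt (by simp)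
  have key : ∀ j k : Fin 3, pd k (pd j φ) x =
      fderiv ℝ (fderiv ℝ φ) x (Pi.single k 1) (Pi.single j 1) := by
    intro j k
    unfold pd
    rw [fderiv_clm_apply h1 (differentiableAt_const _)]
    simp
  rw [key, key]
  exact hs _ _

/-- if `φ` is a nonvanishing solution of the Schrödinger equation
`−Δφ + vφ = 0`, then `α = ∇φ/φ` solves the quaternionic Riccati equation `Dα + α² = −v`. -/
theorem riccati_from_schroedinger
    (Ω : Set (Fin 3 → ℝ)) (hΩ : IsOpen Ω)
    (v : (Fin 3 → ℝ) → ℂ) (hv : ContinuousOn v Ω)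
    (φ : (Fin 3 → ℝ) → ℂ) (hφ : ContDiffOn ℝ 2 φ Ω)
    (hφ0 : ∀ x ∈ Ω, φ x ≠ 0)
    (hSch : ∀ x ∈ Ω, -lap φ x + v x * φ x = 0) :
    ∀ x ∈ Ω,
      Dq (fun y => quat 0 (pd 0 φ y / φ y) (pd 1 φ y / φ y) (pd 2 φ y / φ y)) x +
        quat 0 (pd 0 φ x / φ x) (pd 1 φ x / φ x) (pd 2 φ x / φ x) *
          quat 0 (pd 0 φ x / φ x) (pd 1 φ x / φ x) (pd 2 φ x / φ x) =
      -((v x : ℂ) : HC) := by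
  intro x hx
  have h := hφ.contDiffAt (hΩ.mem_nhds hx)
  have h0 := hφ0 x hx
  have hS := hSch x hx
  have q := pd_quot φ x h h0
  have c01 := pd_comm φ x h 0 1
  have c02 := pd_comm φ x h 0 2
  have c12 := pd_comm φ x h 1 2
  unfold lap at hS
  have hv' : v x = (pd 0 (pd 0 φ) x + pd 1 (pd 1 φ) x + pd 2 (pd 2 φ) x) / φ x := by
    rw [eq_div_iff h0]; linear_combination hS
  ext <;> simp only [Dq, Quaternion.re_add, Quaternion.imI_add, Quaternion.imJ_add,
    Quaternion.imK_add, Quaternion.re_mul, Quaternion.imI_mul, Quaternion.imJ_mul,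
    Quaternion.imK_mul] <;>
    simp [pdq, quat, e1, e2, e3, q, pd_zero, hv', c01, c02, c12] <;> field_simp <;> ring
end
end

section
/- Let Ω ⊆ ℝ³ be open and let α(x) = α₁(x₁)e₁ + α₂(x₂)e₂ + α₃(x₃)e₃, where α₁, α₂, α₃ : ℝ → ℂ are continuously differentiable functions of a single variable. Define the scalar potentials w_k := Dα^{(k)} − α² for k = 0,1,2,3; explicitly, with s := α₁² + α₂² + α₃² (so α² = −s), w₀ = −(α₁' + α₂' + α₃') + s, w₁ = −α₁' + α₂' + α₃' + s, w₂ = α₁' − α₂' + α₃' + s, w₃ = α₁' + α₂' − α₃' + s (each α_j' evaluated at x_j). If f : Ω → ℍ(ℂ) is twice differentiable and satisfies Df + fα = 0 on Ω, then each component f_k (k = 0,1,2,3) satisfies the scalar Schrödinger equation −Δf_k + w_k f_k = 0 on Ω. -/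
noncomputable section

/-- The diagonal purely vectorial function `α(x) = α₁(x₁)e₁ + α₂(x₂)e₂ + α₃(x₃)e₃`. -/
def dal (a1 a2 a3 : ℝ → ℂ) (x : Fin 3 → ℝ) : HC :=
  quat 0 (a1 (x 0)) (a2 (x 1)) (a3 (x 2))

/-- `s = α₁² + α₂² + α₃²` (so that `α² = −s`). -/
def sq3 (a1 a2 a3 : ℝ → ℂ) (x : Fin 3 → ℝ) : ℂ :=
  a1 (x 0) ^ 2 + a2 (x 1) ^ 2 + a3 (x 2) ^ 2

/-- The scalar potentials `v_k = −Dα^{(k)} − α²`, written explicitly. -/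
def vpot (a1 a2 a3 : ℝ → ℂ) : Fin 4 → (Fin 3 → ℝ) → ℂ :=
  ![fun x => deriv a1 (x 0) + deriv a2 (x 1) + deriv a3 (x 2) + sq3 a1 a2 a3 x,
    fun x => deriv a1 (x 0) - deriv a2 (x 1) - deriv a3 (x 2) + sq3 a1 a2 a3 x,
    fun x => -deriv a1 (x 0) + deriv a2 (x 1) - deriv a3 (x 2) + sq3 a1 a2 a3 x,
    fun x => -deriv a1 (x 0) - deriv a2 (x 1) + deriv a3 (x 2) + sq3 a1 a2 a3 x]

/-- The scalar potentials `w_k = Dα^{(k)} − α²`, written explicitly. -/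
def wpot (a1 a2 a3 : ℝ → ℂ) : Fin 4 → (Fin 3 → ℝ) → ℂ :=
  ![fun x => -(deriv a1 (x 0) + deriv a2 (x 1) + deriv a3 (x 2)) + sq3 a1 a2 a3 x,
    fun x => -deriv a1 (x 0) + deriv a2 (x 1) + deriv a3 (x 2) + sq3 a1 a2 a3 x,
    fun x => deriv a1 (x 0) - deriv a2 (x 1) + deriv a3 (x 2) + sq3 a1 a2 a3 x,
    fun x => deriv a1 (x 0) + deriv a2 (x 1) - deriv a3 (x 2) + sq3 a1 a2 a3 x]

/-- The `k`-th complex component of a biquaternion. -/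
def qc (k : Fin 4) (q : HC) : ℂ := ![q.re, q.imI, q.imJ, q.imK] k

open Topology Filter in
lemma aux_key (x : Fin 3 → ℝ) (c1 c2 c3 d1 d2 d3 : ℂ)
    (p1 p2 p3 q1 q2 q3 b1 b2 b3 : (Fin 3 → ℝ) → ℂ)
    (hp1 : DifferentiableAt ℝ p1 x) (hp2 : DifferentiableAt ℝ p2 x)
    (hp3 : DifferentiableAt ℝ p3 x)
    (hq1 : DifferentiableAt ℝ q1 x) (hq2 : DifferentiableAt ℝ q2 x)
    (hq3 : DifferentiableAt ℝ q3 x)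
    (hb1 : DifferentiableAt ℝ b1 x) (hb2 : DifferentiableAt ℝ b2 x)
    (hb3 : DifferentiableAt ℝ b3 x)
    (h : ∀ᶠ y in 𝓝 x, c1 * p1 y + c2 * p2 y + c3 * p3 y + d1 * (q1 y * b1 y)
      + d2 * (q2 y * b2 y) + d3 * (q3 y * b3 y) = 0) (j : Fin 3) :
    c1 * pd j p1 x + c2 * pd j p2 x + c3 * pd j p3 x
      + d1 * (q1 x * pd j b1 x + b1 x * pd j q1 x)
      + d2 * (q2 x * pd j b2 x + b2 x * pd j q2 x)
      + d3 * (q3 x * pd j b3 x + b3 x * pd j q3 x) = 0 := by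
  have H := (((((hp1.hasFDerivAt.const_mul c1).add (hp2.hasFDerivAt.const_mul c2)).add
    (hp3.hasFDerivAt.const_mul c3)).add ((hq1.hasFDerivAt.mul hb1.hasFDerivAt).const_mul d1)).add
    ((hq2.hasFDerivAt.mul hb2.hasFDerivAt).const_mul d2)).add
    ((hq3.hasFDerivAt.mul hb3.hasFDerivAt).const_mul d3)
  have H0 : HasFDerivAt (fun _ : Fin 3 → ℝ => (0 : ℂ)) _ x :=
    H.congr_of_eventuallyEq (by
      filter_upwards [h] with y hy
      simpa using hy.symm)
  have E := congrArg (fun L => L (Pi.single j (1 : ℝ))) (H0.unique (hasFDerivAt_const (0 : ℂ) x))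
  simp [-mul_eq_zero] at E
  simp only [pd]
  linear_combination E

lemma aux_coord (a : ℝ → ℂ) (i : Fin 3) (x : Fin 3 → ℝ) (ha : DifferentiableAt ℝ a (x i)) :
    DifferentiableAt ℝ (fun y : Fin 3 → ℝ => a (y i)) x ∧
    ∀ j, pd j (fun y : Fin 3 → ℝ => a (y i)) x = if j = i then deriv a (x i) else 0 := by
  have h : HasFDerivAt (fun y : Fin 3 → ℝ => y i)
      (ContinuousLinearMap.proj (R := ℝ) (φ := fun _ : Fin 3 => ℝ) i) x :=
    hasFDerivAt_apply i x
  have h' : HasFDerivAt (fun y : Fin 3 → ℝ => a (y i)) _ x :=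
    HasFDerivAt.comp x (g := a) ha.hasFDerivAt h
  refine ⟨h'.differentiableAt, fun j => ?_⟩
  rw [pd, h'.fderiv]
  by_cases hji : j = i
  · subst hji; simp
  · simp [hji, Pi.single_apply, Ne.symm hji]

lemma aux_c2 (u : (Fin 3 → ℝ) → ℂ) (x : Fin 3 → ℝ) (hu : ContDiffAt ℝ 2 u x) :
    DifferentiableAt ℝ u x ∧ (∀ j, DifferentiableAt ℝ (pd j u) x) ∧
    ∀ i j, pd i (pd j u) x = pd j (pd i u) x := by
  have hd : DifferentiableAt ℝ (fderiv ℝ u) x :=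
    (hu.fderiv_right (m := 1) (by norm_num)).differentiableAt (by norm_num)
  have hp : ∀ j, HasFDerivAt (pd j u) _ x := fun j =>
    hd.hasFDerivAt.clm_apply (hasFDerivAt_const (Pi.single j (1 : ℝ) : Fin 3 → ℝ) x)
  refine ⟨hu.differentiableAt (by norm_num), fun j => (hp j).differentiableAt, fun i j => ?_⟩
  have hs := hu.isSymmSndFDerivAt (by simp)
  rw [pd, pd, (hp i).fderiv, (hp j).fderiv]
  simpa using hs.eq (Pi.single i 1) (Pi.single j 1)

/-- Proposition 2 of the paper: if `f` solves `Df + fα = 0` with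
diagonal `α`, then each component `f_k` solves the scalar Schrödinger equation
`−Δf_k + w_k f_k = 0`. -/
theorem components_solve_schroedinger
    (Ω : Set (Fin 3 → ℝ)) (hΩ : IsOpen Ω)
    (a1 a2 a3 : ℝ → ℂ)
    (ha1 : ContDiff ℝ 1 a1) (ha2 : ContDiff ℝ 1 a2) (ha3 : ContDiff ℝ 1 a3)
    (f : (Fin 3 → ℝ) → HC) (hf : QC2On f Ω)
    (hfeq : ∀ x ∈ Ω, Dq f x + f x * dal a1 a2 a3 x = 0) :
    ∀ k : Fin 4, ∀ x ∈ Ω,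
      -lap (fun y => qc k (f y)) x + wpot a1 a2 a3 k x * qc k (f x) = 0 := by
  intro k x hx
  obtain ⟨h0, h1, h2, h3⟩ := hf
  have hn := hΩ.mem_nhds hx
  obtain ⟨d0, D0, S0⟩ := aux_c2 _ x (h0.contDiffAt hn)
  obtain ⟨d1, D1, S1⟩ := aux_c2 _ x (h1.contDiffAt hn)
  obtain ⟨d2, D2, S2⟩ := aux_c2 _ x (h2.contDiffAt hn)
  obtain ⟨d3, D3, S3⟩ := aux_c2 _ x (h3.contDiffAt hn)
  obtain ⟨b1, B1⟩ := aux_coord a1 0 x (ha1.differentiable (by norm_num) _)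
  obtain ⟨b2, B2⟩ := aux_coord a2 1 x (ha2.differentiable (by norm_num) _)
  obtain ⟨b3, B3⟩ := aux_coord a3 2 x (ha3.differentiable (by norm_num) _)
  have hre : ∀ y ∈ Ω, (-1) * pd 0 (fun y => (f y).imI) y + (-1) * pd 1 (fun y => (f y).imJ) y
      + (-1) * pd 2 (fun y => (f y).imK) y + (-1) * ((f y).imI * a1 (y 0))
      + (-1) * ((f y).imJ * a2 (y 1)) + (-1) * ((f y).imK * a3 (y 2)) = 0 := by
    intro y hy
    have := congrArg QuaternionAlgebra.re (hfeq y hy)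
    simp only [Dq, Quaternion.re_add, Quaternion.re_mul, Quaternion.re_zero] at this
    simp [ e1, e2, e3, pdq, dal, quat] at this
    linear_combination this
  have hI : ∀ y ∈ Ω, 1 * pd 0 (fun y => (f y).re) y + 1 * pd 1 (fun y => (f y).imK) y
      + (-1) * pd 2 (fun y => (f y).imJ) y + 1 * ((f y).re * a1 (y 0))
      + (-1) * ((f y).imK * a2 (y 1)) + 1 * ((f y).imJ * a3 (y 2)) = 0 := by
    intro y hy
    have := congrArg QuaternionAlgebra.imI (hfeq y hy)
    simp only [Dq, Quaternion.imI_add, Quaternion.imI_mul, Quaternion.imI_zero] at this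
    simp [ e1, e2, e3, pdq, dal, quat] at this
    linear_combination this
  have hJ : ∀ y ∈ Ω, (-1) * pd 0 (fun y => (f y).imK) y + 1 * pd 1 (fun y => (f y).re) y
      + 1 * pd 2 (fun y => (f y).imI) y + 1 * ((f y).imK * a1 (y 0))
      + 1 * ((f y).re * a2 (y 1)) + (-1) * ((f y).imI * a3 (y 2)) = 0 := by
    intro y hy
    have := congrArg QuaternionAlgebra.imJ (hfeq y hy)
    simp only [Dq, Quaternion.imJ_add, Quaternion.imJ_mul, Quaternion.imJ_zero] at this
    simp [ e1, e2, e3, pdq, dal, quat] at this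
    linear_combination this
  have hK : ∀ y ∈ Ω, 1 * pd 0 (fun y => (f y).imJ) y + (-1) * pd 1 (fun y => (f y).imI) y
      + 1 * pd 2 (fun y => (f y).re) y + (-1) * ((f y).imJ * a1 (y 0))
      + 1 * ((f y).imI * a2 (y 1)) + 1 * ((f y).re * a3 (y 2)) = 0 := by
    intro y hy
    have := congrArg QuaternionAlgebra.imK (hfeq y hy)
    simp only [Dq, Quaternion.imK_add, Quaternion.imK_mul, Quaternion.imK_zero] at this
    simp [ e1, e2, e3, pdq, dal, quat] at this
    linear_combination this
  have KR := aux_key x _ _ _ _ _ _ _ _ _ _ _ _ _ _ _ (D1 0) (D2 1) (D3 2) d1 d2 d3 b1 b2 b3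
    (Filter.eventually_of_mem hn hre)
  have KI := aux_key x _ _ _ _ _ _ _ _ _ _ _ _ _ _ _ (D0 0) (D3 1) (D2 2) d0 d3 d2 b1 b2 b3
    (Filter.eventually_of_mem hn hI)
  have KJ := aux_key x _ _ _ _ _ _ _ _ _ _ _ _ _ _ _ (D3 0) (D0 1) (D1 2) d3 d0 d1 b1 b2 b3
    (Filter.eventually_of_mem hn hJ)
  have KK := aux_key x _ _ _ _ _ _ _ _ _ _ _ _ _ _ _ (D2 0) (D1 1) (D0 2) d2 d1 d0 b1 b2 b3
    (Filter.eventually_of_mem hn hK)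
  simp only [B1, B2, B3] at KR KI KJ KK
  have eR := hre x hx
  have eI := hI x hx
  have eJ := hJ x hx
  have eK := hK x hx
  have r0 := KR 0
  have r1 := KR 1
  have r2 := KR 2
  have i0 := KI 0
  have i1 := KI 1
  have i2 := KI 2
  have j0 := KJ 0
  have j1 := KJ 1
  have j2 := KJ 2
  have k0 := KK 0
  have k1 := KK 1
  have k2 := KK 2
  simp at r0 r1 r2 i0 i1 i2 j0 j1 j2 k0 k1 k2
  fin_cases k
  · simp [lap, qc, wpot, sq3]
    linear_combination (-1) * i0 - j1 - k2 + S3 0 1 - S2 0 2 + S1 1 2 + a1 (x 0) * eI + a2 (x 1) * eJ + a3 (x 2) * eK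
  · simp [lap, qc, wpot, sq3]
    linear_combination r0 - j2 + k1 + S2 0 1 + S3 0 2 - S0 1 2 - a1 (x 0) * eR - a3 (x 2) * eJ + a2 (x 1) * eK
  · simp [lap, qc, wpot, sq3]
    linear_combination r1 - k0 + i2 - S1 0 1 + S3 1 2 + S0 0 2 - a2 (x 1) * eR - a1 (x 0) * eK + a3 (x 2) * eI
  · simp [lap, qc, wpot, sq3]
    linear_combination r2 - i1 + j0 - S1 0 2 - S2 1 2 - S0 0 1 - a3 (x 2) * eR - a2 (x 1) * eI + a1 (x 0) * eJ
end
end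

section
/- Let Ω ⊆ ℝ³ be open and let α(x) = α₁(x₁)e₁ + α₂(x₂)e₂ + α₃(x₃)e₃, where α₁, α₂, α₃ : ℝ → ℂ are continuously differentiable. Define the scalar potentials v_k := −Dα^{(k)} − α² for k = 0,1,2,3; explicitly, with s := α₁² + α₂² + α₃², v₀ = α₁' + α₂' + α₃' + s, v₁ = α₁' − α₂' − α₃' + s, v₂ = −α₁' + α₂' − α₃' + s, v₃ = −α₁' − α₂' + α₃' + s. If g₀, g₁, g₂, g₃ : Ω → ℂ are twice differentiable scalar functions satisfying −Δg_k + v_k g_k = 0 on Ω, then the function f := (D − M^α)g = Dg − gα, where g = g₀ + g₁e₁ + g₂e₂ + g₃e₃, satisfies Df + fα = 0 on Ω. -/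
noncomputable section

theorem pd_add' (k : Fin 3) (u v : (Fin 3 → ℝ) → ℂ) (x : Fin 3 → ℝ)
    (hu : DifferentiableAt ℝ u x) (hv : DifferentiableAt ℝ v x) :
    pd k (fun y => u y + v y) x = pd k u x + pd k v x := by
  unfold pd
  rw [fderiv_fun_add hu hv]; rfl

theorem pd_sub' (k : Fin 3) (u v : (Fin 3 → ℝ) → ℂ) (x : Fin 3 → ℝ)
    (hu : DifferentiableAt ℝ u x) (hv : DifferentiableAt ℝ v x) :
    pd k (fun y => u y - v y) x = pd k u x - pd k v x := by
  unfold pd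
  rw [fderiv_fun_sub hu hv]; rfl

theorem pd_neg' (k : Fin 3) (u : (Fin 3 → ℝ) → ℂ) (x : Fin 3 → ℝ) :
    pd k (fun y => -u y) x = -pd k u x := by
  unfold pd
  rw [fderiv_fun_neg]; rfl

theorem pd_mul' (k : Fin 3) (u v : (Fin 3 → ℝ) → ℂ) (x : Fin 3 → ℝ)
    (hu : DifferentiableAt ℝ u x) (hv : DifferentiableAt ℝ v x) :
    pd k (fun y => u y * v y) x = u x * pd k v x + v x * pd k u x := by
  unfold pd
  rw [fderiv_fun_mul hu hv]; simp

theorem pd_coord (k j : Fin 3) (a : ℝ → ℂ) (x : Fin 3 → ℝ) (ha : Differentiable ℝ a) :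
    pd k (fun y => a (y j)) x = if j = k then deriv a (x j) else 0 := by
  unfold pd
  have h1 : HasFDerivAt (fun y : Fin 3 → ℝ => y j)
      (ContinuousLinearMap.proj (R := ℝ) (φ := fun _ : Fin 3 => ℝ) j) x :=
    (ContinuousLinearMap.proj (R := ℝ) (φ := fun _ : Fin 3 => ℝ) j).hasFDerivAt
  have h2 := (ha (x j)).hasDerivAt.hasFDerivAt.comp x h1
  have h3 := h2.fderiv
  simp only [Function.comp_def] at h3
  rw [h3]
  by_cases h : j = k
  · subst h; simp
  · simp [h]

theorem pd_diff (Ω : Set (Fin 3 → ℝ)) (hΩ : IsOpen Ω) (u : (Fin 3 → ℝ) → ℂ)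
    (hu : ContDiffOn ℝ 2 u Ω) (x : Fin 3 → ℝ) (hx : x ∈ Ω) (k : Fin 3) :
    DifferentiableAt ℝ (pd k u) x := by
  have h : ContDiffAt ℝ 1 (fderiv ℝ u) x :=
    (hu.contDiffAt (hΩ.mem_nhds hx)).fderiv_right (by norm_num)
  exact (h.differentiableAt (by norm_num)).clm_apply (differentiableAt_const _)

theorem pd_comm' (Ω : Set (Fin 3 → ℝ)) (hΩ : IsOpen Ω) (u : (Fin 3 → ℝ) → ℂ)
    (hu : ContDiffOn ℝ 2 u Ω) (x : Fin 3 → ℝ) (hx : x ∈ Ω) (j k : Fin 3) :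
    pd j (pd k u) x = pd k (pd j u) x := by
  have hc := hu.contDiffAt (hΩ.mem_nhds hx)
  have h : DifferentiableAt ℝ (fderiv ℝ u) x :=
    (hc.fderiv_right (m := 1) (by norm_num)).differentiableAt (by norm_num)
  have hs : IsSymmSndFDerivAt ℝ u x := hc.isSymmSndFDerivAt (by simp)
  have key : ∀ a b : Fin 3, pd a (pd b u) x
      = fderiv ℝ (fderiv ℝ u) x (Pi.single a 1) (Pi.single b 1) := by
    intro a b
    unfold pd
    rw [fderiv_clm_apply h (differentiableAt_const _)]
    simp
  rw [key, key]
  exact hs _ _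

set_option linter.unusedSimpArgs false in
set_option maxHeartbeats 2000000 in
/-- Proposition 3 of the paper: if `g_k` solve the scalar Schrödinger
equations `−Δg_k + v_k g_k = 0`, then `f = (D − M^α)g` solves `Df + fα = 0`. -/
theorem solution_from_schroedinger_solutions
    (Ω : Set (Fin 3 → ℝ)) (hΩ : IsOpen Ω)
    (a1 a2 a3 : ℝ → ℂ)
    (ha1 : ContDiff ℝ 1 a1) (ha2 : ContDiff ℝ 1 a2) (ha3 : ContDiff ℝ 1 a3)
    (g0 g1 g2 g3 : (Fin 3 → ℝ) → ℂ)
    (hg0 : ContDiffOn ℝ 2 g0 Ω) (hg1 : ContDiffOn ℝ 2 g1 Ω)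
    (hg2 : ContDiffOn ℝ 2 g2 Ω) (hg3 : ContDiffOn ℝ 2 g3 Ω)
    (heq0 : ∀ x ∈ Ω, -lap g0 x + vpot a1 a2 a3 0 x * g0 x = 0)
    (heq1 : ∀ x ∈ Ω, -lap g1 x + vpot a1 a2 a3 1 x * g1 x = 0)
    (heq2 : ∀ x ∈ Ω, -lap g2 x + vpot a1 a2 a3 2 x * g2 x = 0)
    (heq3 : ∀ x ∈ Ω, -lap g3 x + vpot a1 a2 a3 3 x * g3 x = 0) :
    (let g : (Fin 3 → ℝ) → HC := fun y => quat (g0 y) (g1 y) (g2 y) (g3 y)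
     let f : (Fin 3 → ℝ) → HC := fun y => Dq g y - g y * dal a1 a2 a3 y
     ∀ x ∈ Ω, Dq f x + f x * dal a1 a2 a3 x = 0) := by
  intro g f x hx
  have d0 := (hg0.contDiffAt (hΩ.mem_nhds hx)).differentiableAt (by norm_num)
  have d1 := (hg1.contDiffAt (hΩ.mem_nhds hx)).differentiableAt (by norm_num)
  have d2 := (hg2.contDiffAt (hΩ.mem_nhds hx)).differentiableAt (by norm_num)
  have d3 := (hg3.contDiffAt (hΩ.mem_nhds hx)).differentiableAt (by norm_num)
  have p0 := pd_diff Ω hΩ g0 hg0 x hx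
  have p1 := pd_diff Ω hΩ g1 hg1 x hx
  have p2 := pd_diff Ω hΩ g2 hg2 x hx
  have p3 := pd_diff Ω hΩ g3 hg3 x hx
  have b1 := ha1.differentiable (by norm_num)
  have b2 := ha2.differentiable (by norm_num)
  have b3 := ha3.differentiable (by norm_num)
  have c1 : DifferentiableAt ℝ (fun y : Fin 3 → ℝ => a1 (y 0)) x := by fun_prop
  have c2 : DifferentiableAt ℝ (fun y : Fin 3 → ℝ => a2 (y 1)) x := by fun_prop
  have c3 : DifferentiableAt ℝ (fun y : Fin 3 → ℝ => a3 (y 2)) x := by fun_prop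
  have f0 : (fun y => (f y).re) = fun y => -pd 0 g1 y - pd 1 g2 y - pd 2 g3 y
      + g1 y * a1 (y 0) + g2 y * a2 (y 1) + g3 y * a3 (y 2) := by
    funext y
    simp only [f, Dq, Quaternion.re_add, Quaternion.imI_add, Quaternion.imJ_add, Quaternion.imK_add, Quaternion.re_sub, Quaternion.imI_sub, Quaternion.imJ_sub, Quaternion.imK_sub, Quaternion.re_mul, Quaternion.imI_mul, Quaternion.imJ_mul, Quaternion.imK_mul]
    simp [g, pdq, quat, dal, e1, e2, e3]
    ring
  have f1 : (fun y => (f y).imI) = fun y => pd 0 g0 y + pd 1 g3 y - pd 2 g2 y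
      - g0 y * a1 (y 0) - g2 y * a3 (y 2) + g3 y * a2 (y 1) := by
    funext y
    simp only [f, Dq, Quaternion.re_add, Quaternion.imI_add, Quaternion.imJ_add, Quaternion.imK_add, Quaternion.re_sub, Quaternion.imI_sub, Quaternion.imJ_sub, Quaternion.imK_sub, Quaternion.re_mul, Quaternion.imI_mul, Quaternion.imJ_mul, Quaternion.imK_mul]
    simp [g, pdq, quat, dal, e1, e2, e3]
    ring
  have f2 : (fun y => (f y).imJ) = fun y => pd 1 g0 y + pd 2 g1 y - pd 0 g3 y
      - g0 y * a2 (y 1) - g3 y * a1 (y 0) + g1 y * a3 (y 2) := by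
    funext y
    simp only [f, Dq, Quaternion.re_add, Quaternion.imI_add, Quaternion.imJ_add, Quaternion.imK_add, Quaternion.re_sub, Quaternion.imI_sub, Quaternion.imJ_sub, Quaternion.imK_sub, Quaternion.re_mul, Quaternion.imI_mul, Quaternion.imJ_mul, Quaternion.imK_mul]
    simp [g, pdq, quat, dal, e1, e2, e3]
    ring
  have f3 : (fun y => (f y).imK) = fun y => pd 2 g0 y + pd 0 g2 y - pd 1 g1 y
      - g0 y * a3 (y 2) - g1 y * a2 (y 1) + g2 y * a1 (y 0) := by
    funext y
    simp only [f, Dq, Quaternion.re_add, Quaternion.imI_add, Quaternion.imJ_add, Quaternion.imK_add, Quaternion.re_sub, Quaternion.imI_sub, Quaternion.imJ_sub, Quaternion.imK_sub, Quaternion.re_mul, Quaternion.imI_mul, Quaternion.imJ_mul, Quaternion.imK_mul]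
    simp [g, pdq, quat, dal, e1, e2, e3]
    ring
  have E0 := congrFun f0 x
  have E1 := congrFun f1 x
  have E2 := congrFun f2 x
  have E3 := congrFun f3 x
  have q0 := heq0 x hx
  have q1 := heq1 x hx
  have q2 := heq2 x hx
  have q3 := heq3 x hx
  simp only [vpot, lap, sq3, Matrix.cons_val] at q0 q1 q2 q3
  have s0 := pd_comm' Ω hΩ g0 hg0 x hx
  have s1 := pd_comm' Ω hΩ g1 hg1 x hx
  have s2 := pd_comm' Ω hΩ g2 hg2 x hx
  have s3 := pd_comm' Ω hΩ g3 hg3 x hx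
  clear_value f
  ext
  · simp only [Dq, Quaternion.re_add, Quaternion.imI_add, Quaternion.imJ_add, Quaternion.imK_add, Quaternion.re_sub, Quaternion.imI_sub, Quaternion.imJ_sub, Quaternion.imK_sub, Quaternion.re_mul, Quaternion.imI_mul, Quaternion.imJ_mul, Quaternion.imK_mul, Quaternion.re_zero, Quaternion.imI_zero, Quaternion.imJ_zero, Quaternion.imK_zero]
    simp only [pdq, quat, dal, e1, e2, e3, f0, f1, f2, f3, E0, E1, E2, E3]
    simp (disch := fun_prop) only [pd_add', pd_sub', pd_neg', pd_mul', pd_coord]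
    simp
    rw [s1 2 1, s2 2 0, s3 1 0]
    linear_combination q0
  · simp only [Dq, Quaternion.re_add, Quaternion.imI_add, Quaternion.imJ_add, Quaternion.imK_add, Quaternion.re_sub, Quaternion.imI_sub, Quaternion.imJ_sub, Quaternion.imK_sub, Quaternion.re_mul, Quaternion.imI_mul, Quaternion.imJ_mul, Quaternion.imK_mul, Quaternion.re_zero, Quaternion.imI_zero, Quaternion.imJ_zero, Quaternion.imK_zero]
    simp only [pdq, quat, dal, e1, e2, e3, f0, f1, f2, f3, E0, E1, E2, E3]
    simp (disch := fun_prop) only [pd_add', pd_sub', pd_neg', pd_mul', pd_coord]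
    simp
    rw [s0 2 1, s2 1 0, s3 2 0]
    linear_combination q1
  · simp only [Dq, Quaternion.re_add, Quaternion.imI_add, Quaternion.imJ_add, Quaternion.imK_add, Quaternion.re_sub, Quaternion.imI_sub, Quaternion.imJ_sub, Quaternion.imK_sub, Quaternion.re_mul, Quaternion.imI_mul, Quaternion.imJ_mul, Quaternion.imK_mul, Quaternion.re_zero, Quaternion.imI_zero, Quaternion.imJ_zero, Quaternion.imK_zero]
    simp only [pdq, quat, dal, e1, e2, e3, f0, f1, f2, f3, E0, E1, E2, E3]
    simp (disch := fun_prop) only [pd_add', pd_sub', pd_neg', pd_mul', pd_coord]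
    simp
    rw [s0 2 0, s1 1 0, s3 2 1]
    linear_combination q2
  · simp only [Dq, Quaternion.re_add, Quaternion.imI_add, Quaternion.imJ_add, Quaternion.imK_add, Quaternion.re_sub, Quaternion.imI_sub, Quaternion.imJ_sub, Quaternion.imK_sub, Quaternion.re_mul, Quaternion.imI_mul, Quaternion.imJ_mul, Quaternion.imK_mul, Quaternion.re_zero, Quaternion.imI_zero, Quaternion.imJ_zero, Quaternion.imK_zero]
    simp only [pdq, quat, dal, e1, e2, e3, f0, f1, f2, f3, E0, E1, E2, E3]
    simp (disch := fun_prop) only [pd_add', pd_sub', pd_neg', pd_mul', pd_coord]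
    simp
    rw [s0 1 0, s1 2 0, s2 2 1]
    linear_combination q3
end
end

section
/- Let α(x) = α₁(x₁)e₁ + α₂(x₂)e₂ + α₃(x₃)e₃, where α₁, α₂, α₃ : ℝ → ℂ are continuous, and let Λ₁, Λ₂, Λ₃ : ℝ → ℂ be antiderivatives, Λ_k' = α_k. Define the scalar functions f₀(x) = exp(−Λ₁(x₁) − Λ₂(x₂) − Λ₃(x₃)), f₁(x) = exp(−Λ₁(x₁) + Λ₂(x₂) + Λ₃(x₃)), f₂(x) = exp(Λ₁(x₁) − Λ₂(x₂) + Λ₃(x₃)), f₃(x) = exp(Λ₁(x₁) + Λ₂(x₂) − Λ₃(x₃)). Then for any complex constants c₀, c₁, c₂, c₃, the function f = c₀f₀ + c₁f₁e₁ + c₂f₂e₂ + c₃f₃e₃ satisfies Df + fα = 0 on ℝ³. -/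
noncomputable section

theorem pd_exp_aux (M1 M2 M3 : ℝ → ℂ) (b1 b2 b3 c : ℂ) (x : Fin 3 → ℝ)
    (h1 : HasDerivAt M1 b1 (x 0)) (h2 : HasDerivAt M2 b2 (x 1)) (h3 : HasDerivAt M3 b3 (x 2))
    (g : (Fin 3 → ℝ) → ℂ)
    (hg : g = fun y => c * Complex.exp (M1 (y 0) + M2 (y 1) + M3 (y 2))) :
    pd 0 g x = b1 * g x ∧ pd 1 g x = b2 * g x ∧ pd 2 g x = b3 * g x := by
  have p : ∀ k : Fin 3, HasFDerivAt (fun y : Fin 3 → ℝ => y k)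
      (ContinuousLinearMap.proj (R := ℝ) (φ := fun _ : Fin 3 => ℝ) k) x :=
    fun k => hasFDerivAt_apply k x
  have k1 := h1.hasFDerivAt.comp x (p 0)
  have k2 := h2.hasFDerivAt.comp x (p 1)
  have k3 := h3.hasFDerivAt.comp x (p 2)
  have H := (((k1.add k2).add k3).cexp).const_mul c
  have H' := H.congr_of_eventuallyEq (f₁ := g) (by rw [hg]; exact Filter.EventuallyEq.rfl)
  have e : g x = c * Complex.exp (M1 (x 0) + M2 (x 1) + M3 (x 2)) := by rw [hg]
  simp only [pd, H'.fderiv, e]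
  refine ⟨?_, ?_, ?_⟩ <;> simp <;> ring

/-- the explicit family of exact one-component solutions: with
`Λ_k' = α_k`, the function `f = c₀f₀ + c₁f₁e₁ + c₂f₂e₂ + c₃f₃e₃` built from the
exponentials `f_k = exp(±Λ₁ ± Λ₂ ± Λ₃)` solves `Df + fα = 0` on ℝ³. -/
theorem exponential_solutions
    (a1 a2 a3 : ℝ → ℂ)
    (ha1 : Continuous a1) (ha2 : Continuous a2) (ha3 : Continuous a3)
    (L1 L2 L3 : ℝ → ℂ)
    (hL1 : ∀ t : ℝ, HasDerivAt L1 (a1 t) t)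
    (hL2 : ∀ t : ℝ, HasDerivAt L2 (a2 t) t)
    (hL3 : ∀ t : ℝ, HasDerivAt L3 (a3 t) t)
    (c0 c1 c2 c3 : ℂ) :
    (let f : (Fin 3 → ℝ) → HC := fun y =>
      quat (c0 * Complex.exp (-L1 (y 0) - L2 (y 1) - L3 (y 2)))
           (c1 * Complex.exp (-L1 (y 0) + L2 (y 1) + L3 (y 2)))
           (c2 * Complex.exp (L1 (y 0) - L2 (y 1) + L3 (y 2)))
           (c3 * Complex.exp (L1 (y 0) + L2 (y 1) - L3 (y 2)))
     ∀ x : Fin 3 → ℝ, Dq f x + f x * dal a1 a2 a3 x = 0) := by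
  intro f x
  obtain ⟨r0, r1, r2⟩ := pd_exp_aux (fun t => -L1 t) (fun t => -L2 t) (fun t => -L3 t) _ _ _ c0 x
    (hL1 _).neg (hL2 _).neg (hL3 _).neg (fun y => (f y).re)
    (by funext y; simp only [f, quat, sub_eq_add_neg])
  obtain ⟨i0, i1, i2⟩ := pd_exp_aux (fun t => -L1 t) L2 L3 _ _ _ c1 x
    (hL1 _).neg (hL2 _) (hL3 _) (fun y => (f y).imI)
    (by funext y; simp only [f, quat])
  obtain ⟨j0, j1, j2⟩ := pd_exp_aux L1 (fun t => -L2 t) L3 _ _ _ c2 x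
    (hL1 _) (hL2 _).neg (hL3 _) (fun y => (f y).imJ)
    (by funext y; simp only [f, quat, sub_eq_add_neg])
  obtain ⟨k0, k1, k2⟩ := pd_exp_aux L1 L2 (fun t => -L3 t) _ _ _ c3 x
    (hL1 _) (hL2 _) (hL3 _).neg (fun y => (f y).imK)
    (by funext y; simp only [f, quat, sub_eq_add_neg])
  rw [Dq]
  apply Quaternion.ext <;>
    simp only [Quaternion.re_add, Quaternion.imI_add, Quaternion.imJ_add, Quaternion.imK_add,
      Quaternion.re_mul, Quaternion.imI_mul, Quaternion.imJ_mul, Quaternion.imK_mul,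
      Quaternion.re_zero, Quaternion.imI_zero, Quaternion.imJ_zero, Quaternion.imK_zero] <;>
    simp only [pdq, r0, r1, r2, i0, i1, i2, j0, j1, j2, k0, k1, k2] <;>
    generalize f x = q <;>
    simp only [e1, e2, e3, dal, quat] <;> ring
end
end
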